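/- Let τ be a type and ar : τ → ℕ an arity function with ar(P) ≥ 1 for all P, so that a literal is a dependent pair (P, a⃗) with a⃗ a vector of length ar(P) over τ. Let simP^eq : τ → τ → ℝ be defined by simP^eq(s,t) = 1 if s = t and 0 otherwise, let λ ∈ (0,1), and let w_p : τ → ℝ with w_p(t) > 0 for all t. Then the weighted literal similarity built from simP^eq satisfies, for all literals l₁, l₂: simL^{weight,λ}(l₁,l₂) = 1 if and only if l₁ = l₂. -/

import Mathlib

open Classical Finset

/-- Maximum of a real-valued function over a nonempty `Fin n`. -/
noncomputable def fmax {n : ℕ} (hn : 0 < n) (f : Fin n → ℝ) : ℝ :=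
  Finset.univ.sup' ⟨⟨0, hn⟩, Finset.mem_univ _⟩ f

/-- Ordered (positional) similarity between two vectors of symbols. -/
noncomputable def simOrd {τ : Type*} (simP : τ → τ → ℝ) {m n : ℕ}
    (a : Fin m → τ) (b : Fin n → τ) : ℝ :=
  (∑ i : Fin (min m n),
      simP (a ⟨i.1, lt_of_lt_of_le i.2 (Nat.min_le_left m n)⟩)
           (b ⟨i.1, lt_of_lt_of_le i.2 (Nat.min_le_right m n)⟩)) / ((min m n : ℕ) : ℝ)

/-- Best-match (unordered) similarity between two nonempty vectors of symbols. -/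
noncomputable def simUnord {τ : Type*} (simP : τ → τ → ℝ) {m n : ℕ}
    (hm : 0 < m) (hn : 0 < n) (a : Fin m → τ) (b : Fin n → τ) : ℝ :=
  ((∑ i : Fin m, fmax hn (fun j => simP (a i) (b j))) +
   (∑ j : Fin n, fmax hm (fun i => simP (b j) (a i)))) / ((m : ℝ) + (n : ℝ))

/-- Parameter similarity: convex combination of ordered and unordered similarity. -/
noncomputable def simPara {τ : Type*} (simP : τ → τ → ℝ) (lam : ℝ) {m n : ℕ}
    (hm : 0 < m) (hn : 0 < n) (a : Fin m → τ) (b : Fin n → τ) : ℝ :=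
  lam * simOrd simP a b + (1 - lam) * simUnord simP hm hn a b

/-- Ordered weight aggregation `w_ord`. -/
noncomputable def wOrd {τ : Type*} (wp : τ → ℝ) {m n : ℕ}
    (a : Fin m → τ) (b : Fin n → τ) : ℝ :=
  ∑ i : Fin (min m n),
      wp (a ⟨i.1, lt_of_lt_of_le i.2 (Nat.min_le_left m n)⟩) *
      wp (b ⟨i.1, lt_of_lt_of_le i.2 (Nat.min_le_right m n)⟩)

/-- Unordered weight aggregation `w_unord`, relative to a choice function `beta`
selecting for each symbol a best-matching entry of the other vector. -/
noncomputable def wUnord {τ : Type*} (wp : τ → ℝ)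
    (beta : τ → (k : ℕ) → (Fin k → τ) → τ) {m n : ℕ}
    (a : Fin m → τ) (b : Fin n → τ) : ℝ :=
  (∑ i : Fin m, wp (a i) * wp (beta (a i) n b)) +
  (∑ j : Fin n, wp (b j) * wp (beta (b j) m a))

/-- Weighted literal similarity between literals `(P, a)` and `(Q, b)`. -/
noncomputable def simLweight {τ : Type*} (simP : τ → τ → ℝ) (wp : τ → ℝ)
    (beta : τ → (k : ℕ) → (Fin k → τ) → τ) (lam : ℝ) {m n : ℕ}
    (hm : 0 < m) (hn : 0 < n) (P Q : τ) (a : Fin m → τ) (b : Fin n → τ) : ℝ :=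
  (wp P * wp Q * simP P Q +
      simPara simP lam hm hn a b *
        (lam * wOrd wp a b + (1 - lam) * wUnord wp beta a b)) /
  (wp P * wp Q + (lam * wOrd wp a b + (1 - lam) * wUnord wp beta a b))

/-!
The weighted literal similarity is a mean of `simP P Q` and `simPara`, both at most `1`, with
positive weights, so it equals `1` exactly when both of them do. The first gives `P = Q`, hence
equal arities; the second forces `simOrd` to be `1`, that is, agreement of the arguments position
by position.
-/

section Sums

variable {ι R : Type*} [Fintype ι]

theorem sum_le_card_of_le_one [Semiring R] [PartialOrder R] [IsOrderedAddMonoid R]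
    {f : ι → R} (hf : ∀ i, f i ≤ 1) :
    ∑ i, f i ≤ Fintype.card ι := by
  simpa using Finset.sum_le_card_nsmul univ f 1 fun i _ => hf i

theorem sum_eq_card_iff_of_le_one [Semiring R] [PartialOrder R] [IsOrderedCancelAddMonoid R]
    {f : ι → R} (hf : ∀ i, f i ≤ 1) :
    ∑ i, f i = Fintype.card ι ↔ ∀ i, f i = 1 := by
  simpa using Finset.sum_eq_sum_iff_of_le (s := univ) (g := fun _ => (1 : R)) fun i _ => hf i

theorem mul_add_mul_eq_add_iff_of_le_one [Ring R] [LinearOrder R] [IsStrictOrderedRing R]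
    {u v x y : R} (hu : 0 < u) (hv : 0 < v) (hx : x ≤ 1) (hy : y ≤ 1) :
    u * x + v * y = u + v ↔ x = 1 ∧ y = 1 := by
  rw [add_eq_add_iff_eq_and_eq (mul_le_of_le_one_right hu.le hx)
    (mul_le_of_le_one_right hv.le hy), mul_eq_left₀ hu.ne', mul_eq_left₀ hv.ne']

end Sums

section BestMatch

variable {n : ℕ} {hn : 0 < n} {f : Fin n → ℝ} {c : ℝ}

theorem fmax_le (h : ∀ i, f i ≤ c) : fmax hn f ≤ c :=
  Finset.sup'_le _ _ fun i _ => h i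

theorem le_fmax (i : Fin n) : f i ≤ fmax hn f :=
  Finset.le_sup' f (mem_univ i)

end BestMatch

section Similarity

variable {τ : Type*} {simP : τ → τ → ℝ} {lam : ℝ} {m n : ℕ}

theorem simOrd_le_one (hle : ∀ s t, simP s t ≤ 1) (a : Fin m → τ) (b : Fin n → τ) :
    simOrd simP a b ≤ 1 :=
  div_le_one_of_le₀
    ((sum_le_card_of_le_one fun _ => hle _ _).trans_eq (by rw [Fintype.card_fin]))
    (Nat.cast_nonneg _)

theorem simUnord_le_one (hle : ∀ s t, simP s t ≤ 1) (hm : 0 < m) (hn : 0 < n)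
    (a : Fin m → τ) (b : Fin n → τ) : simUnord simP hm hn a b ≤ 1 := by
  have hrow : ∑ i, fmax hn (fun j => simP (a i) (b j)) ≤ m := by
    simpa using sum_le_card_of_le_one fun i => fmax_le fun j => hle (a i) (b j)
  have hcol : ∑ j, fmax hm (fun i => simP (b j) (a i)) ≤ n := by
    simpa using sum_le_card_of_le_one fun j => fmax_le fun i => hle (b j) (a i)
  exact div_le_one_of_le₀ (add_le_add hrow hcol) (by positivity)

theorem simPara_le_one (hle : ∀ s t, simP s t ≤ 1) (hlam₀ : 0 ≤ lam) (hlam₁ : lam ≤ 1)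
    (hm : 0 < m) (hn : 0 < n) (a : Fin m → τ) (b : Fin n → τ) :
    simPara simP lam hm hn a b ≤ 1 :=
  convex_Iic (1 : ℝ) (simOrd_le_one hle a b) (simUnord_le_one hle hm hn a b)
    hlam₀ (sub_nonneg.2 hlam₁) (add_sub_cancel _ _)

theorem simOrd_eq_one_iff (hle : ∀ s t, simP s t ≤ 1) (hm : 0 < m) (hn : 0 < n)
    (a : Fin m → τ) (b : Fin n → τ) :
    simOrd simP a b = 1 ↔ ∀ i (hi : i < m) (hj : i < n), simP (a ⟨i, hi⟩) (b ⟨i, hj⟩) = 1 := by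
  have hcard : ((min m n : ℕ) : ℝ) ≠ 0 := Nat.cast_ne_zero.2 (lt_min hm hn).ne'
  have hsum := sum_eq_card_iff_of_le_one (ι := Fin (min m n)) fun i =>
    hle (a ⟨i, i.2.trans_le (min_le_left m n)⟩) (b ⟨i, i.2.trans_le (min_le_right m n)⟩)
  rw [Fintype.card_fin] at hsum
  rw [simOrd, div_eq_one_iff_eq hcard, hsum, Fin.forall_iff]
  exact ⟨fun h i hi hj => h i (lt_min hi hj),
    fun h i hij => h i (lt_min_iff.1 hij).1 (lt_min_iff.1 hij).2⟩

theorem simUnord_self (hle : ∀ s t, simP s t ≤ 1) (hself : ∀ s, simP s s = 1)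
    (hm : 0 < m) (a : Fin m → τ) : simUnord simP hm hm a a = 1 := by
  have hmax (i : Fin m) : fmax hm (fun j => simP (a i) (a j)) = 1 :=
    le_antisymm (fmax_le fun _ => hle _ _)
      ((hself (a i)).ge.trans (le_fmax (f := fun j => simP (a i) (a j)) i))
  have hcard : (m : ℝ) + m ≠ 0 := by positivity
  simp [simUnord, hmax, hcard]

theorem simOrd_eq_one_of_simPara_eq_one (hle : ∀ s t, simP s t ≤ 1)
    (hlam₀ : 0 < lam) (hlam₁ : lam ≤ 1) {hm : 0 < m} {hn : 0 < n}
    {a : Fin m → τ} {b : Fin n → τ} (h : simPara simP lam hm hn a b = 1) :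
    simOrd simP a b = 1 := by
  have hsum : lam * simOrd simP a b + (1 - lam) * simUnord simP hm hn a b = lam + (1 - lam) :=
    h.trans (add_sub_cancel _ _).symm
  have hord := mul_le_of_le_one_right hlam₀.le (simOrd_le_one hle a b)
  have hunord := mul_le_of_le_one_right (sub_nonneg.2 hlam₁) (simUnord_le_one hle hm hn a b)
  exact (mul_eq_left₀ hlam₀.ne').1 ((add_eq_add_iff_eq_and_eq hord hunord).1 hsum).1

theorem simPara_eq_one_iff (hle : ∀ s t, simP s t ≤ 1) (hone : ∀ s t, simP s t = 1 ↔ s = t)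
    (hlam₀ : 0 < lam) (hlam₁ : lam ≤ 1) (hm : 0 < m) (a b : Fin m → τ) :
    simPara simP lam hm hm a b = 1 ↔ a = b := by
  have hord (c : Fin m → τ) : simOrd simP a c = 1 ↔ a = c := by
    simp only [simOrd_eq_one_iff hle hm hm, hone, funext_iff, Fin.forall_iff]
    exact ⟨fun h i hi => h i hi hi, fun h i hi _ => h i hi⟩
  refine ⟨fun h => (hord b).1 (simOrd_eq_one_of_simPara_eq_one hle hlam₀ hlam₁ h), ?_⟩
  rintro rfl
  rw [simPara, (hord a).2 rfl, simUnord_self hle fun s => (hone s s).2 rfl]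
  ring

end Similarity

section Weights

variable {τ : Type*} {simP : τ → τ → ℝ} {wp : τ → ℝ} {lam : ℝ} {m n : ℕ}

theorem wOrd_pos (hwp : ∀ t, 0 < wp t) (hm : 0 < m) (hn : 0 < n)
    (a : Fin m → τ) (b : Fin n → τ) : 0 < wOrd wp a b :=
  Finset.sum_pos (fun _ _ => mul_pos (hwp _) (hwp _)) ⟨⟨0, lt_min hm hn⟩, mem_univ _⟩

theorem wUnord_nonneg (hwp : ∀ t, 0 ≤ wp t) (beta : τ → (k : ℕ) → (Fin k → τ) → τ)
    (a : Fin m → τ) (b : Fin n → τ) : 0 ≤ wUnord wp beta a b :=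
  add_nonneg (Finset.sum_nonneg fun _ _ => mul_nonneg (hwp _) (hwp _))
    (Finset.sum_nonneg fun _ _ => mul_nonneg (hwp _) (hwp _))

theorem simLweight_eq_one_iff (hle : ∀ s t, simP s t ≤ 1) (hwp : ∀ t, 0 < wp t)
    (hlam₀ : 0 < lam) (hlam₁ : lam ≤ 1) (beta : τ → (k : ℕ) → (Fin k → τ) → τ)
    (hm : 0 < m) (hn : 0 < n) (P Q : τ) (a : Fin m → τ) (b : Fin n → τ) :
    simLweight simP wp beta lam hm hn P Q a b = 1 ↔
      simP P Q = 1 ∧ simPara simP lam hm hn a b = 1 := by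
  have hpred : 0 < wp P * wp Q := mul_pos (hwp P) (hwp Q)
  have hpara : 0 < lam * wOrd wp a b + (1 - lam) * wUnord wp beta a b :=
    add_pos_of_pos_of_nonneg (mul_pos hlam₀ (wOrd_pos hwp hm hn a b))
      (mul_nonneg (sub_nonneg.2 hlam₁) (wUnord_nonneg (fun t => (hwp t).le) beta a b))
  rw [simLweight, div_eq_one_iff_eq (add_pos hpred hpara).ne', mul_comm (simPara ..),
    mul_add_mul_eq_add_iff_of_le_one hpred hpara (hle P Q)
      (simPara_le_one hle hlam₀.le hlam₁ hm hn a b)]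

end Weights

theorem weighted_literal_eq_one_iff_general {τ : Type*} (ar : τ → ℕ) (har : ∀ P, 1 ≤ ar P)
    (simP : τ → τ → ℝ) (hle : ∀ s t, simP s t ≤ 1) (hone : ∀ s t, simP s t = 1 ↔ s = t)
    (lam : ℝ) (hlam : 0 < lam ∧ lam ≤ 1)
    (wp : τ → ℝ) (hwp : ∀ t, 0 < wp t)
    (beta : τ → (k : ℕ) → (Fin k → τ) → τ)
    (_hbeta : ∀ (x : τ) (k : ℕ) (hk : 0 < k) (y : Fin k → τ),
      (∃ j : Fin k, beta x k y = y j) ∧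
      simP x (beta x k y) = fmax hk (fun j => simP x (y j)))
    (l₁ l₂ : (P : τ) × (Fin (ar P) → τ)) :
    simLweight simP wp beta lam (har l₁.1) (har l₂.1) l₁.1 l₂.1 l₁.2 l₂.2 = 1 ↔
      l₁ = l₂ := by
  obtain ⟨hlam₀, hlam₁⟩ := hlam
  rw [simLweight_eq_one_iff hle hwp hlam₀ hlam₁, hone]
  obtain ⟨P, a⟩ := l₁
  obtain ⟨Q, b⟩ := l₂
  constructor
  · rintro ⟨rfl : P = Q, hpara⟩
    rw [(simPara_eq_one_iff hle hone hlam₀ hlam₁ (har P) a b).1 hpara]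
  · rintro ⟨⟩
    exact ⟨rfl, (simPara_eq_one_iff hle hone hlam₀ hlam₁ (har P) a a).2 rfl⟩

/-- for the crisp predicate similarity `simP^eq` (1 on equal symbols,
0 otherwise), the weighted literal similarity of two dependent literals equals 1 iff
the literals are equal. -/
theorem weighted_literal_eq_one_iff {τ : Type*} (ar : τ → ℕ) (har : ∀ P, 1 ≤ ar P)
    (simPeq : τ → τ → ℝ) (hPeq : ∀ s t, simPeq s t = if s = t then 1 else 0)
    (lam : ℝ) (hlam : 0 < lam ∧ lam < 1)
    (wp : τ → ℝ) (hwp : ∀ t, 0 < wp t)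
    (beta : τ → (k : ℕ) → (Fin k → τ) → τ)
    (hbeta : ∀ (x : τ) (k : ℕ) (hk : 0 < k) (y : Fin k → τ),
      (∃ j : Fin k, beta x k y = y j) ∧
      simPeq x (beta x k y) = fmax hk (fun j => simPeq x (y j)))
    (l₁ l₂ : (P : τ) × (Fin (ar P) → τ)) :
    simLweight simPeq wp beta lam (har l₁.1) (har l₂.1) l₁.1 l₂.1 l₁.2 l₂.2 = 1 ↔
      l₁ = l₂ :=
  weighted_literal_eq_one_iff_general ar har simPeq (fun s t => by rw [hPeq]; split_ifs <;> simp)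
    (fun s t => by simp [hPeq]) lam (hlam.imp_right le_of_lt) wp hwp beta hbeta l₁ l₂
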